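/- (Mode-tracking ODE, Theorem 4.) Let D be a positive natural number, α, σ : ℝ → ℝ smooth with α(t) > 0 and σ(t) > 0 for all t, λ(t) = log(α(t)²/σ(t)²), f(t) = (d/dt) log α(t), g(t)² = -λ'(t)·σ(t)². Let p : ℝ → ℝ^D → ℝ be smooth and everywhere positive, satisfying the linear-drift Fokker–Planck equation ∂_t p(t,x) = -div_x(f(t)·x·p(t,x)) + (1/2)·g(t)²·Δ_x p(t,x) for all t and x. Fix t > 0 and x_t ∈ ℝ^D, and for s ∈ (0, t) set f̃(s) = α(t)/α(s), g̃²(s) = σ(t)² - f̃(s)²·σ(s)², ψ(s) = f̃(s)²/g̃²(s); assume g̃²(s) > 0 for all s ∈ (0, t). Let y : (0, t) → ℝ^D be a differentiable curve such that for every s ∈ (0, t), ∇_x log p(s, y(s)) + (f̃(s)/g̃²(s))·(x_t - f̃(s)·y(s)) = 0, and assume the linear map A(s, y(s)) = Hess_x log p(s, y(s)) - ψ(s)·Id is invertible for every s ∈ (0, t). Then y satisfies the mode-tracking ODE: y'(s) = f(s)·y(s) - g(s)²·∇_x log p(s, y(s)) - (1/2)·g(s)²·A(s, y(s))⁻¹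 applied to ∇_x(Δ_x log p)(s, y(s)), for all s ∈ (0, t). Moreover ψ(s) = (1/σ(s)²)·e^{λ(t)}/(e^{λ(s)} - e^{λ(t)}). -/

import Mathlib

/-!
Along the curve the score `∇ log p(s, y(s))` cancels the score of the forward transition density
`z ↦ p(x_t ∣ x_s = z)`, and the proof differentiates this balance in `s`.

Dividing the Fokker–Planck equation by `p` gives
`∂_t log p = -f (D + ⟪x, ∇ log p⟫) + g² / 2 (Δ log p + ‖∇ log p‖²)`, and the gradient of the
right-hand side is the time derivative of the score at a fixed point; the motion of `y` adds the
term `Hess log p · y'`. For the transition density, the schedule satisfies `f̃' = -f f̃` and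
`(g̃²)' = -f̃² g²`, so the derivative of its score is `(g² ψ - f)` times that score plus
`ψ (f y - y')`. In the sum everything collapses to
`A (y' - f y + g² ∇ log p) = -(g² / 2) ∇ Δ log p`.
-/

open scoped BigOperators RealInnerProductSpace
open MeasureTheory

/-- Divergence of a vector field on `EuclideanSpace ℝ (Fin D)`. -/
noncomputable def divg {D : ℕ} (F : EuclideanSpace ℝ (Fin D) → EuclideanSpace ℝ (Fin D))
    (x : EuclideanSpace ℝ (Fin D)) : ℝ :=
  ∑ i, fderiv ℝ F x (EuclideanSpace.single i 1) i

/-- Laplacian of a scalar field on `EuclideanSpace ℝ (Fin D)`. -/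
noncomputable def lap {D : ℕ} (f : EuclideanSpace ℝ (Fin D) → ℝ)
    (x : EuclideanSpace ℝ (Fin D)) : ℝ :=
  divg (gradient f) x

/-- The Hessian of `x ↦ log p(s, x)` at `x`, viewed as a continuous linear map. -/
noncomputable def hessLog {D : ℕ} (p : ℝ → EuclideanSpace ℝ (Fin D) → ℝ) (s : ℝ)
    (x : EuclideanSpace ℝ (Fin D)) :
    EuclideanSpace ℝ (Fin D) →L[ℝ] EuclideanSpace ℝ (Fin D) :=
  fderiv ℝ (fun z => gradient (fun w => Real.log (p s w)) z) x

open InnerProductSpace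
open scoped Gradient Topology

section Slices

variable {𝕜 X F : Type*} [NontriviallyNormedField 𝕜] [NormedAddCommGroup X] [NormedSpace 𝕜 X]
  [NormedAddCommGroup F] [NormedSpace 𝕜 F]

lemma eventually_differentiableAt_of_contDiffAt {n : WithTop ℕ∞} {g : X → F} {x : X}
    (hg : ContDiffAt 𝕜 n g x) (hn : 1 ≤ n) : ∀ᶠ z in 𝓝 x, DifferentiableAt 𝕜 g z :=
  ((hg.of_le hn).eventually (by simp)).mono fun _ hz => hz.differentiableAt one_ne_zero

variable {L : 𝕜 → X → F} {s : 𝕜} {x : X}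

lemma fderiv_slice (hL : DifferentiableAt 𝕜 (fun q : 𝕜 × X => L q.1 q.2) (s, x)) :
    fderiv 𝕜 (L s) x =
      (fderiv 𝕜 (fun q : 𝕜 × X => L q.1 q.2) (s, x)).comp (.inr 𝕜 𝕜 X) :=
  (hL.hasFDerivAt.comp x (hasFDerivAt_prodMk_right s x)).fderiv

lemma deriv_slice (hL : DifferentiableAt 𝕜 (fun q : 𝕜 × X => L q.1 q.2) (s, x)) :
    deriv (fun τ => L τ x) s = fderiv 𝕜 (fun q : 𝕜 × X => L q.1 q.2) (s, x) (1, 0) := by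
  have h := (hL.hasFDerivAt.comp s (hasFDerivAt_prodMk_left s x)).hasDerivAt.deriv
  simpa [Function.comp_def] using h

lemma fderiv_fderiv_slice_apply (hL : ContDiffAt 𝕜 2 (fun q : 𝕜 × X => L q.1 q.2) (s, x))
    (v w : X) :
    fderiv 𝕜 (fderiv 𝕜 (L s)) x v w =
      fderiv 𝕜 (fderiv 𝕜 (fun q : 𝕜 × X => L q.1 q.2)) (s, x) (0, v) (0, w) := by
  have hslice : fderiv 𝕜 (L s) =ᶠ[𝓝 x] fun z =>
      (fderiv 𝕜 (fun q : 𝕜 × X => L q.1 q.2) (s, z)).comp (.inr 𝕜 𝕜 X) :=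
    ((Continuous.prodMk_right s).continuousAt.eventually
      (eventually_differentiableAt_of_contDiffAt hL one_le_two)).mono fun _ hz => fderiv_slice hz
  have hΦ := ((hL.fderiv_right (m := 1) le_rfl).differentiableAt one_ne_zero).hasFDerivAt
  have hcomp := (hΦ.comp x (hasFDerivAt_prodMk_right s x)).clm_comp
    (hasFDerivAt_const (ContinuousLinearMap.inr 𝕜 𝕜 X) x)
  rw [(hcomp.congr_of_eventuallyEq hslice).fderiv]
  simp

lemma fderiv_deriv_slice_apply (hL : ContDiffAt 𝕜 2 (fun q : 𝕜 × X => L q.1 q.2) (s, x))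
    (v : X) :
    fderiv 𝕜 (fun z => deriv (fun τ => L τ z) s) x v =
      fderiv 𝕜 (fderiv 𝕜 (fun q : 𝕜 × X => L q.1 q.2)) (s, x) (0, v) (1, 0) := by
  have hslice : (fun z => deriv (fun τ => L τ z) s) =ᶠ[𝓝 x] fun z =>
      fderiv 𝕜 (fun q : 𝕜 × X => L q.1 q.2) (s, z) (1, 0) :=
    ((Continuous.prodMk_right s).continuousAt.eventually
      (eventually_differentiableAt_of_contDiffAt hL one_le_two)).mono fun _ hz => deriv_slice hz
  have hΦ := ((hL.fderiv_right (m := 1) le_rfl).differentiableAt one_ne_zero).hasFDerivAt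
  have happly := (hΦ.comp x (hasFDerivAt_prodMk_right s x)).clm_apply
    (hasFDerivAt_const ((1, 0) : 𝕜 × X) x)
  rw [(happly.congr_of_eventuallyEq hslice).fderiv]
  simp

lemma hasDerivAt_fderiv_along [IsRCLikeNormedField 𝕜] {y : 𝕜 → X} {y' : X}
    (hL : ContDiffAt 𝕜 2 (fun q : 𝕜 × X => L q.1 q.2) (s, y s)) (hy : HasDerivAt y y' s) :
    HasDerivAt (fun τ => fderiv 𝕜 (L τ) (y τ))
      (fderiv 𝕜 (fun z => deriv (fun τ => L τ z) s) (y s)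
        + fderiv 𝕜 (fderiv 𝕜 (L s)) (y s) y') s := by
  have hcurve : HasDerivAt (fun τ => (τ, y τ)) (1, y') s := (hasDerivAt_id s).prodMk hy
  have hslice : (fun τ => fderiv 𝕜 (L τ) (y τ)) =ᶠ[𝓝 s] fun τ =>
      (fderiv 𝕜 (fun q : 𝕜 × X => L q.1 q.2) (τ, y τ)).comp (.inr 𝕜 𝕜 X) :=
    (hcurve.continuousAt.eventually
      (eventually_differentiableAt_of_contDiffAt hL one_le_two)).mono fun _ hz => fderiv_slice hz
  have hΦ := ((hL.fderiv_right (m := 1) le_rfl).differentiableAt one_ne_zero).hasFDerivAt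
  have hcomp := (HasFDerivAt.comp_hasDerivAt (f := fun τ => (τ, y τ)) s hΦ hcurve).clm_comp
    (hasDerivAt_const s (ContinuousLinearMap.inr 𝕜 𝕜 X))
  refine (hcomp.congr_of_eventuallyEq hslice).congr_deriv (ContinuousLinearMap.ext fun v => ?_)
  have hsymm := (hL.isSymmSndFDerivAt (by simp)).eq (0, v) (1, 0)
  have hsplit : ((1, y') : 𝕜 × X) = (1, 0) + (0, y') := by simp
  rw [hsplit, map_add]
  simp [fderiv_deriv_slice_apply hL, fderiv_fderiv_slice_apply hL, hsymm]

end Slices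

section Gradient

variable {E : Type*} [NormedAddCommGroup E] [InnerProductSpace ℝ E] [CompleteSpace E]
  {u : E → ℝ} {x : E}

lemma contDiffAt_gradient {m n : WithTop ℕ∞} (hu : ContDiffAt ℝ n u x) (hmn : m + 1 ≤ n) :
    ContDiffAt ℝ m (∇ u) x :=
  (toDual ℝ E).symm.contDiff.contDiffAt.comp x (hu.fderiv_right hmn)

lemma inner_fderiv_gradient_apply (hu : ContDiffAt ℝ 2 u x) (v w : E) :
    ⟪fderiv ℝ (∇ u) x v, w⟫ = fderiv ℝ (fderiv ℝ u) x v w := by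
  have hgrad : DifferentiableAt ℝ (∇ u) x :=
    (contDiffAt_gradient (m := 1) hu le_rfl).differentiableAt one_ne_zero
  have hfderiv : DifferentiableAt ℝ (fderiv ℝ u) x :=
    (hu.fderiv_right (m := 1) le_rfl).differentiableAt one_ne_zero
  have h := fderiv_inner_apply ℝ hgrad (differentiableAt_const w) v
  simp only [inner_gradient_left] at h
  rw [fderiv_clm_apply hfderiv (differentiableAt_const w)] at h
  simpa using h.symm

lemma isSelfAdjoint_fderiv_gradient (hu : ContDiffAt ℝ 2 u x) :
    IsSelfAdjoint (fderiv ℝ (∇ u) x) := by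
  rw [ContinuousLinearMap.isSelfAdjoint_iff_isSymmetric]
  intro v w
  have hsymm := hu.isSymmSndFDerivAt (by simp)
  simp only [ContinuousLinearMap.coe_coe]
  rw [real_inner_comm _ v, inner_fderiv_gradient_apply hu, inner_fderiv_gradient_apply hu,
    hsymm.eq]

lemma gradient_log (hu : DifferentiableAt ℝ u x) (hx : u x ≠ 0) :
    ∇ (fun z => Real.log (u z)) x = (u x)⁻¹ • ∇ u x := by
  simp [gradient, fderiv.log hu hx]

lemma hasGradientAt_inner {F G : E → E} {F' G' : E →L[ℝ] E} (hF : HasFDerivAt F F' x)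
    (hG : HasFDerivAt G G' x) :
    HasGradientAt (fun z => ⟪F z, G z⟫) (F'.adjoint (G x) + G'.adjoint (F x)) x := by
  rw [hasGradientAt_iff_hasFDerivAt]
  refine (hF.inner ℝ hG).congr_fderiv (ContinuousLinearMap.ext fun v => ?_)
  simp [ContinuousLinearMap.adjoint_inner_left, real_inner_comm, add_comm]

lemma hasDerivAt_gradient_along {L : ℝ → E → ℝ} {y : ℝ → E} {s : ℝ} {y' : E}
    (hL : ContDiffAt ℝ 2 (fun q : ℝ × E => L q.1 q.2) (s, y s)) (hy : HasDerivAt y y' s) :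
    HasDerivAt (fun τ => ∇ (L τ) (y τ))
      (∇ (fun z => deriv (fun τ => L τ z) s) (y s) + fderiv ℝ (∇ (L s)) (y s) y') s := by
  have hLs : ContDiffAt ℝ 2 (L s) (y s) := hL.comp (y s) (contDiff_prodMk_right s).contDiffAt
  have h := (toDual ℝ E).symm.toContinuousLinearEquiv.hasFDerivAt.comp_hasDerivAt s
    (hasDerivAt_fderiv_along hL hy)
  refine h.congr_deriv (ext_inner_right ℝ fun v => ?_)
  simp [inner_add_left, inner_fderiv_gradient_apply hLs]

end Gradient

section Divergence

variable {D : ℕ} {u : EuclideanSpace ℝ (Fin D) → ℝ} {x : EuclideanSpace ℝ (Fin D)}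

lemma gradient_apply (i : Fin D) : ∇ u x i = fderiv ℝ u x (EuclideanSpace.single i 1) := by
  simp [← inner_gradient_left, EuclideanSpace.inner_single_right]

lemma contDiffAt_divg {F : EuclideanSpace ℝ (Fin D) → EuclideanSpace ℝ (Fin D)}
    {m n : WithTop ℕ∞} (hF : ContDiffAt ℝ n F x) (hmn : m + 1 ≤ n) :
    ContDiffAt ℝ m (divg F) x :=
  ContDiffAt.sum fun i _ => (EuclideanSpace.proj (𝕜 := ℝ) i).contDiff.contDiffAt.comp x
    ((hF.fderiv_right hmn).clm_apply contDiffAt_const)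

lemma contDiffAt_lap {m n : WithTop ℕ∞} (hu : ContDiffAt ℝ n u x) (hmn : m + 2 ≤ n) :
    ContDiffAt ℝ m (lap u) x :=
  contDiffAt_divg (contDiffAt_gradient hu (by rwa [add_assoc, one_add_one_eq_two])) le_rfl

lemma divg_smul {F : EuclideanSpace ℝ (Fin D) → EuclideanSpace ℝ (Fin D)}
    (hu : DifferentiableAt ℝ u x) (hF : DifferentiableAt ℝ F x) :
    divg (fun z => u z • F z) x = u x * divg F x + ⟪∇ u x, F x⟫ := by
  simp only [divg, fderiv_fun_smul hu hF, PiLp.inner_apply, gradient_apply, Finset.mul_sum,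
    ← Finset.sum_add_distrib]
  simp [mul_comm (F x _)]

lemma divg_const_smul_id (c : ℝ) : divg (fun z => c • z) x = c * D := by
  simp [divg, fderiv_fun_const_smul differentiableAt_fun_id, mul_comm]

lemma lap_eq_mul_lap_log (hu : ContDiffAt ℝ 2 u x) (hx : u x ≠ 0) :
    lap u x = u x * (lap (fun z => Real.log (u z)) x
      + ⟪∇ (fun z => Real.log (u z)) x, ∇ (fun z => Real.log (u z)) x⟫) := by
  have hgrad : ∇ u =ᶠ[𝓝 x] fun z => u z • ∇ (fun w => Real.log (u w)) z := by
    filter_upwards [eventually_differentiableAt_of_contDiffAt hu one_le_two,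
      hu.continuousAt.eventually_ne hx] with z hz hz0
    rw [gradient_log hz hz0, smul_inv_smul₀ hz0]
  have hlog := (contDiffAt_gradient (m := 1) (hu.log hx) le_rfl).differentiableAt one_ne_zero
  calc lap u x = divg (fun z => u z • ∇ (fun w => Real.log (u w)) z) x := by
        simp only [lap, divg, hgrad.fderiv_eq]
    _ = _ := by
        rw [divg_smul (hu.differentiableAt two_ne_zero) hlog, hgrad.eq_of_nhds, inner_smul_left]
        simp only [lap, RCLike.conj_to_real, mul_add]

end Divergence

section FokkerPlanck

variable {D : ℕ}

/-- The right-hand side `- div (a x p) + (b / 2) Δ p` of the Fokker–Planck equation for `p = exp ℓ`,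
divided by `p` and written in terms of `ℓ`. -/
noncomputable def logFokkerPlanck (a b : ℝ) (ℓ : EuclideanSpace ℝ (Fin D) → ℝ)
    (x : EuclideanSpace ℝ (Fin D)) : ℝ :=
  -(a * (D + ⟪x, ∇ ℓ x⟫)) + 1 / 2 * b * (lap ℓ x + ⟪∇ ℓ x, ∇ ℓ x⟫)

lemma fokkerPlanck_eq_mul_logFokkerPlanck {u : EuclideanSpace ℝ (Fin D) → ℝ}
    {x : EuclideanSpace ℝ (Fin D)} (a b : ℝ) (hu : ContDiffAt ℝ 2 u x) (hx : u x ≠ 0) :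
    -divg (fun z => u z • (a • z)) x + 1 / 2 * b * lap u x =
      u x * logFokkerPlanck a b (fun z => Real.log (u z)) x := by
  have hdu : DifferentiableAt ℝ u x := hu.differentiableAt two_ne_zero
  have hgrad : ∇ u x = u x • ∇ (fun z => Real.log (u z)) x := by
    rw [gradient_log hdu hx, smul_inv_smul₀ hx]
  rw [divg_smul hdu (by fun_prop), divg_const_smul_id, lap_eq_mul_lap_log hu hx, hgrad,
    inner_smul_left, inner_smul_right, real_inner_comm x, logFokkerPlanck]
  simp only [RCLike.conj_to_real]
  ring

lemma deriv_log_eq_logFokkerPlanck {p : ℝ → EuclideanSpace ℝ (Fin D) → ℝ} {s a b : ℝ}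
    {x : EuclideanSpace ℝ (Fin D)}
    (hp : ContDiffAt ℝ 2 (fun q : ℝ × EuclideanSpace ℝ (Fin D) => p q.1 q.2) (s, x))
    (hx : p s x ≠ 0)
    (hFP : deriv (fun τ => p τ x) s =
      -divg (fun z => p s z • (a • z)) x + 1 / 2 * b * lap (p s) x) :
    deriv (fun τ => Real.log (p τ x)) s = logFokkerPlanck a b (fun z => Real.log (p s z)) x := by
  have htime : DifferentiableAt ℝ (fun τ => p τ x) s :=
    (hp.comp s (contDiff_prodMk_left x).contDiffAt).differentiableAt two_ne_zero
  have hspace : ContDiffAt ℝ 2 (p s) x := hp.comp x (contDiff_prodMk_right s).contDiffAt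
  rw [deriv.log htime hx, hFP, fokkerPlanck_eq_mul_logFokkerPlanck a b hspace hx,
    mul_div_cancel_left₀ _ hx]

lemma gradient_logFokkerPlanck {ℓ : EuclideanSpace ℝ (Fin D) → ℝ} {x : EuclideanSpace ℝ (Fin D)}
    (a b : ℝ) (hℓ : ContDiffAt ℝ 3 ℓ x) :
    ∇ (logFokkerPlanck a b ℓ) x =
      -(a • (∇ ℓ x + fderiv ℝ (∇ ℓ) x x)) + (1 / 2 * b) • ∇ (lap ℓ) x
        + b • fderiv ℝ (∇ ℓ) x (∇ ℓ x) := by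
  have hgrad : HasFDerivAt (∇ ℓ) (fderiv ℝ (∇ ℓ) x) x :=
    ((contDiffAt_gradient (m := 2) hℓ le_rfl).differentiableAt two_ne_zero).hasFDerivAt
  have hadj : (fderiv ℝ (∇ ℓ) x).adjoint = fderiv ℝ (∇ ℓ) x :=
    isSelfAdjoint_fderiv_gradient (hℓ.of_le (by norm_num))
  have hlap : HasGradientAt (lap ℓ) (∇ (lap ℓ) x) x :=
    ((contDiffAt_lap (m := 1) hℓ (by norm_num)).differentiableAt one_ne_zero).hasGradientAt
  have hdrift := hasGradientAt_inner (hasFDerivAt_id x) hgrad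
  have hnorm := hasGradientAt_inner hgrad hgrad
  refine HasGradientAt.gradient (hasGradientAt_iff_hasFDerivAt.2 ?_)
  refine (((hdrift.hasFDerivAt.const_add (D : ℝ)).const_mul a).neg.add
    ((hlap.hasFDerivAt.add hnorm.hasFDerivAt).const_mul (1 / 2 * b))).congr_fderiv ?_
  refine ContinuousLinearMap.ext fun v => ?_
  simp [hadj, ContinuousLinearMap.adjoint_id]
  ring

lemma hasDerivAt_score_along {p : ℝ → EuclideanSpace ℝ (Fin D) → ℝ} {s a b : ℝ}
    {y : ℝ → EuclideanSpace ℝ (Fin D)} {y' : EuclideanSpace ℝ (Fin D)}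
    (hp : ContDiffAt ℝ 3 (fun q : ℝ × EuclideanSpace ℝ (Fin D) => p q.1 q.2) (s, y s))
    (hpos : p s (y s) ≠ 0)
    (hFP : ∀ᶠ x in 𝓝 (y s), deriv (fun τ => p τ x) s =
      -divg (fun z => p s z • (a • z)) x + 1 / 2 * b * lap (p s) x)
    (hy : HasDerivAt y y' s) :
    HasDerivAt (fun τ => ∇ (fun z => Real.log (p τ z)) (y τ))
      (-(a • (∇ (fun z => Real.log (p s z)) (y s) + hessLog p s (y s) (y s)))
        + (1 / 2 * b) • ∇ (fun z => lap (fun w => Real.log (p s w)) z) (y s)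
        + b • hessLog p s (y s) (∇ (fun z => Real.log (p s z)) (y s))
        + hessLog p s (y s) y') s := by
  have hp2 := hp.of_le (show (2 : WithTop ℕ∞) ≤ 3 by norm_num)
  have hspace : ContDiffAt ℝ 3 (p s) (y s) :=
    hp.comp (y s) (contDiff_prodMk_right s).contDiffAt
  have hslice : ContinuousAt (fun x => (s, x)) (y s) := (Continuous.prodMk_right s).continuousAt
  have hlogFP : (fun z => deriv (fun τ => Real.log (p τ z)) s) =ᶠ[𝓝 (y s)]
      logFokkerPlanck a b fun z => Real.log (p s z) := by
    filter_upwards [hFP, hslice.eventually (hp2.eventually (by simp)),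
      hspace.continuousAt.eventually_ne hpos] with x hx hpx hx0
    exact deriv_log_eq_logFokkerPlanck hpx hx0 hx
  have h := hasDerivAt_gradient_along (L := fun τ z => Real.log (p τ z)) (hp2.log hpos) hy
  rwa [hlogFP.gradient_eq, gradient_logFokkerPlanck a b (hspace.log hpos)] at h

end FokkerPlanck

lemma eq_ringInverse_apply {R M : Type*} [Ring R] [TopologicalSpace M] [AddCommGroup M]
    [IsTopologicalAddGroup M] [Module R M] {A : M →L[R] M} (hA : IsUnit A) {v w : M}
    (h : A v = w) : v = Ring.inverse A w := by
  rw [← h, ← mul_apply_eq_comp, Ring.inverse_mul_cancel A hA, one_apply_eq_self]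

section NoiseSchedule

/-- The log signal-to-noise ratio `λ` of the schedule `(α, σ)`. -/
noncomputable def logSNR (α σ : ℝ → ℝ) (t : ℝ) : ℝ :=
  Real.log (α t ^ 2 / σ t ^ 2)

/-- The drift coefficient `f` of the schedule. -/
noncomputable def drift (α : ℝ → ℝ) (t : ℝ) : ℝ :=
  deriv (fun u => Real.log (α u)) t

/-- The squared diffusion coefficient `g²` of the schedule. -/
noncomputable def diffusionSq (α σ : ℝ → ℝ) (t : ℝ) : ℝ :=
  -deriv (logSNR α σ) t * σ t ^ 2

/-- The factor `f̃(s)` of the forward transition `x_t ∣ x_s ∼ 𝒩(f̃(s) x_s, g̃²(s))`. -/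
noncomputable def transitionScale (α : ℝ → ℝ) (t s : ℝ) : ℝ :=
  α t / α s

/-- The variance `g̃²(s)` of the forward transition `x_t ∣ x_s ∼ 𝒩(f̃(s) x_s, g̃²(s))`. -/
noncomputable def transitionVar (α σ : ℝ → ℝ) (t s : ℝ) : ℝ :=
  σ t ^ 2 - transitionScale α t s ^ 2 * σ s ^ 2

/-- The precision `ψ(s)` of the forward transition density as a function of `x_s`. -/
noncomputable def transitionPrecision (α σ : ℝ → ℝ) (t s : ℝ) : ℝ :=
  transitionScale α t s ^ 2 / transitionVar α σ t s

/-- The score `∇_z log p(x_t ∣ x_s = z)` of the forward transition density in its starting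
point. -/
noncomputable def transitionScore {E : Type*} [AddCommGroup E] [Module ℝ E] (α σ : ℝ → ℝ) (t : ℝ)
    (xt : E) (s : ℝ) (z : E) : E :=
  (transitionScale α t s / transitionVar α σ t s) • (xt - transitionScale α t s • z)

variable {α σ : ℝ → ℝ} {s t : ℝ}

lemma drift_eq_deriv_div (hα : DifferentiableAt ℝ α s) (hαs : α s ≠ 0) :
    drift α s = deriv α s / α s :=
  deriv.log hα hαs

lemma exp_logSNR (hα : α s ≠ 0) (hσ : σ s ≠ 0) :
    Real.exp (logSNR α σ s) = α s ^ 2 / σ s ^ 2 :=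
  Real.exp_log (by positivity)

lemma diffusionSq_eq (hα : DifferentiableAt ℝ α s) (hσ : DifferentiableAt ℝ σ s)
    (hαs : α s ≠ 0) (hσs : σ s ≠ 0) :
    diffusionSq α σ s = 2 * σ s * deriv σ s - 2 * drift α s * σ s ^ 2 := by
  have hlogSNR : deriv (logSNR α σ) s = _ :=
    (((hα.hasDerivAt.fun_pow 2).fun_div (hσ.hasDerivAt.fun_pow 2)
      (pow_ne_zero 2 hσs)).log (div_ne_zero (pow_ne_zero 2 hαs) (pow_ne_zero 2 hσs))).deriv
  rw [diffusionSq, hlogSNR, drift_eq_deriv_div hα hαs]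
  field_simp
  ring

lemma hasDerivAt_transitionScale (hα : DifferentiableAt ℝ α s) (hαs : α s ≠ 0) :
    HasDerivAt (transitionScale α t) (-drift α s * transitionScale α t s) s := by
  refine ((hasDerivAt_const s (α t)).div hα.hasDerivAt hαs).congr_deriv ?_
  rw [drift_eq_deriv_div hα hαs, transitionScale]
  field_simp
  ring

lemma hasDerivAt_transitionVar (hα : DifferentiableAt ℝ α s) (hσ : DifferentiableAt ℝ σ s)
    (hαs : α s ≠ 0) (hσs : σ s ≠ 0) :
    HasDerivAt (transitionVar α σ t) (-(transitionScale α t s ^ 2 * diffusionSq α σ s)) s := by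
  refine ((((hasDerivAt_transitionScale hα hαs).pow 2).mul
    (hσ.hasDerivAt.pow 2)).const_sub (σ t ^ 2)).congr_deriv ?_
  simp only [diffusionSq_eq hα hσ hαs hσs, Pi.pow_apply]
  ring

lemma transitionPrecision_eq (hαs : α s ≠ 0) (hαt : α t ≠ 0) (hσs : σ s ≠ 0) (hσt : σ t ≠ 0) :
    transitionPrecision α σ t s = 1 / σ s ^ 2 *
      (Real.exp (logSNR α σ t) / (Real.exp (logSNR α σ s) - Real.exp (logSNR α σ t))) := by
  have hgap : Real.exp (logSNR α σ s) - Real.exp (logSNR α σ t) =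
      transitionVar α σ t s * (α s ^ 2 / (σ s ^ 2 * σ t ^ 2)) := by
    rw [exp_logSNR hαs hσs, exp_logSNR hαt hσt, transitionVar, transitionScale]
    field_simp
  rw [hgap, exp_logSNR hαt hσt, transitionPrecision, transitionScale]
  field_simp

lemma hasDerivAt_transitionScore_along {E : Type*} [NormedAddCommGroup E] [NormedSpace ℝ E]
    {xt : E} {y : ℝ → E} {y' : E}
    (hα : DifferentiableAt ℝ α s) (hσ : DifferentiableAt ℝ σ s) (hαs : α s ≠ 0) (hσs : σ s ≠ 0)
    (hvar : transitionVar α σ t s ≠ 0) (hy : HasDerivAt y y' s) :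
    HasDerivAt (fun τ => transitionScore α σ t xt τ (y τ))
      ((diffusionSq α σ s * transitionPrecision α σ t s - drift α s) •
          transitionScore α σ t xt s (y s)
        + transitionPrecision α σ t s • (drift α s • y s - y')) s := by
  have hscale := hasDerivAt_transitionScale (t := t) hα hαs
  have hgain := hscale.fun_div (hasDerivAt_transitionVar hα hσ hαs hσs) hvar
  refine (hgain.fun_smul ((hscale.fun_smul hy).const_sub xt)).congr_deriv ?_
  simp only [transitionScore, transitionPrecision]
  match_scalars <;> field_simp <;> ring

end NoiseSchedule

theorem mode_tracking_ode_general {D : ℕ} {α σ : ℝ → ℝ} {s t : ℝ}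
    (hα : DifferentiableAt ℝ α s) (hσ : DifferentiableAt ℝ σ s)
    (hαs : 0 < α s) (hσs : 0 < σ s) (hαt : 0 < α t) (hσt : 0 < σ t)
    (hvar : transitionVar α σ t s ≠ 0)
    {p : ℝ → EuclideanSpace ℝ (Fin D) → ℝ} {xt : EuclideanSpace ℝ (Fin D)}
    {y : ℝ → EuclideanSpace ℝ (Fin D)} {y' : EuclideanSpace ℝ (Fin D)}
    (hp : ContDiffAt ℝ 3 (fun q : ℝ × EuclideanSpace ℝ (Fin D) => p q.1 q.2) (s, y s))
    (hpos : 0 < p s (y s))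
    (hFP : ∀ᶠ x in 𝓝 (y s), deriv (fun τ => p τ x) s =
      -divg (fun z => p s z • (drift α s • z)) x + 1 / 2 * diffusionSq α σ s * lap (p s) x)
    (hy : HasDerivAt y y' s)
    (hcrit : ∀ᶠ u in 𝓝 s,
      ∇ (fun z => Real.log (p u z)) (y u) + transitionScore α σ t xt u (y u) = 0)
    (hA : IsUnit (hessLog p s (y s)
      - transitionPrecision α σ t s • ContinuousLinearMap.id ℝ (EuclideanSpace ℝ (Fin D)))) :
    (y' = drift α s • y s - diffusionSq α σ s • ∇ (fun z => Real.log (p s z)) (y s)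
      - (1 / 2 * diffusionSq α σ s) •
          Ring.inverse (hessLog p s (y s)
            - transitionPrecision α σ t s • ContinuousLinearMap.id ℝ (EuclideanSpace ℝ (Fin D)))
          (∇ (fun z => lap (fun w => Real.log (p s w)) z) (y s)))
    ∧ transitionPrecision α σ t s = 1 / σ s ^ 2 *
        (Real.exp (logSNR α σ t) / (Real.exp (logSNR α σ s) - Real.exp (logSNR α σ t))) := by
  refine ⟨?_, transitionPrecision_eq hαs.ne' hαt.ne' hσs.ne' hσt.ne'⟩
  have hbalance := ((hasDerivAt_score_along hp hpos.ne' hFP hy).add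
    (hasDerivAt_transitionScore_along (xt := xt) hα hσ hαs.ne' hσs.ne' hvar hy)).unique
      ((hasDerivAt_const s 0).congr_of_eventuallyEq hcrit)
  rw [eq_neg_of_add_eq_zero_right hcrit.self_of_nhds] at hbalance
  set ψ := transitionPrecision α σ t s
  set H := hessLog p s (y s)
  set score := ∇ (fun z => Real.log (p s z)) (y s)
  set source := ∇ (fun z => lap (fun w => Real.log (p s w)) z) (y s)
  have hlinear : (H - ψ • ContinuousLinearMap.id ℝ (EuclideanSpace ℝ (Fin D)))
      (y' - drift α s • y s + diffusionSq α σ s • score) =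
        -((1 / 2 * diffusionSq α σ s) • source) := by
    rw [← sub_eq_zero, ← hbalance]
    simp only [sub_apply, smul_apply, ContinuousLinearMap.id_apply, map_add, map_sub, map_smul]
    module
  have hsolve := eq_ringInverse_apply hA hlinear
  rw [map_neg, map_smul] at hsolve
  rw [← sub_eq_zero, ← sub_eq_zero.2 hsolve]
  abel

/-- The mode-tracking ODE (Theorem 4). -/
theorem mode_tracking_ode {D : ℕ} (hD : 0 < D)
    (α σ : ℝ → ℝ) (hα : ContDiff ℝ (⊤ : ℕ∞) α) (hσ : ContDiff ℝ (⊤ : ℕ∞) σ)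
    (hαpos : ∀ t, 0 < α t) (hσpos : ∀ t, 0 < σ t)
    (lam f gsq : ℝ → ℝ)
    (hlam : ∀ t, lam t = Real.log (α t ^ 2 / σ t ^ 2))
    (hf : ∀ t, f t = deriv (fun u => Real.log (α u)) t)
    (hgsq : ∀ t, gsq t = -(deriv lam t) * σ t ^ 2)
    (p : ℝ → EuclideanSpace ℝ (Fin D) → ℝ)
    (hp : ContDiff ℝ (⊤ : ℕ∞) (fun q : ℝ × EuclideanSpace ℝ (Fin D) => p q.1 q.2))
    (hppos : ∀ t x, 0 < p t x)
    (hFP : ∀ t x, deriv (fun τ => p τ x) t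
      = - divg (fun y => p t y • (f t • y)) x + (1 / 2) * gsq t * lap (p t) x)
    (t : ℝ) (ht : 0 < t) (xt : EuclideanSpace ℝ (Fin D))
    (ft gt2 ψ : ℝ → ℝ)
    (hft : ∀ s, ft s = α t / α s)
    (hgt2 : ∀ s, gt2 s = σ t ^ 2 - ft s ^ 2 * σ s ^ 2)
    (hψ : ∀ s, ψ s = ft s ^ 2 / gt2 s)
    (hgt2pos : ∀ s ∈ Set.Ioo (0 : ℝ) t, 0 < gt2 s)
    (y y' : ℝ → EuclideanSpace ℝ (Fin D))
    (hy : ∀ s ∈ Set.Ioo (0 : ℝ) t, HasDerivAt y (y' s) s)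
    (hcrit : ∀ s ∈ Set.Ioo (0 : ℝ) t,
      gradient (fun z => Real.log (p s z)) (y s)
        + (ft s / gt2 s) • (xt - ft s • y s) = 0)
    (hA : ∀ s ∈ Set.Ioo (0 : ℝ) t,
      IsUnit (hessLog p s (y s)
        - ψ s • ContinuousLinearMap.id ℝ (EuclideanSpace ℝ (Fin D)))) :
    ∀ s ∈ Set.Ioo (0 : ℝ) t,
      (y' s = f s • y s - gsq s • gradient (fun z => Real.log (p s z)) (y s)
        - ((1 / 2) * gsq s) •
            (Ring.inverse (hessLog p s (y s)
              - ψ s • ContinuousLinearMap.id ℝ (EuclideanSpace ℝ (Fin D))))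
            (gradient (fun z => lap (fun w => Real.log (p s w)) z) (y s)))
      ∧ ψ s = (1 / σ s ^ 2) * (Real.exp (lam t) / (Real.exp (lam s) - Real.exp (lam t))) := by
  obtain rfl : lam = logSNR α σ := funext hlam
  obtain rfl : f = drift α := funext hf
  obtain rfl : gsq = diffusionSq α σ := funext hgsq
  obtain rfl : ft = transitionScale α t := funext hft
  obtain rfl : gt2 = transitionVar α σ t := funext hgt2
  obtain rfl : ψ = transitionPrecision α σ t := funext hψ
  intro s hs
  exact mode_tracking_ode_general (hα.differentiable (by simp) s) (hσ.differentiable (by simp) s)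
    (hαpos s) (hσpos s) (hαpos t) (hσpos t) (hgt2pos s hs).ne'
    (contDiff_infty.1 hp 3).contDiffAt (hppos s _) (.of_forall (hFP s)) (hy s hs)
    (Filter.eventually_of_mem (Ioo_mem_nhds hs.1 hs.2) hcrit) (hA s hs)
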